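/- Every annular continuum E ⊆ 𝔸 contains a circloid; in fact both 𝒞⁺(E) and 𝒞⁻(E) are circloids contained in E. -/

import Mathlib

open Filter Topology

local notation "⟪" x ", " y "⟫" => @inner ℝ _ _ x y

noncomputable section

/-- The open annulus `𝔸 = 𝕋¹ × ℝ`. -/
abbrev Ann := AddCircle (1 : ℝ) × ℝ

/-- `S ⊆ 𝔸` is unbounded from above in the `ℝ`-coordinate. -/
def UnbAbove (S : Set Ann) : Prop := ¬ BddAbove (Prod.snd '' S)

/-- `S ⊆ 𝔸` is unbounded from below in the `ℝ`-coordinate. -/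
def UnbBelow (S : Set Ann) : Prop := ¬ BddBelow (Prod.snd '' S)

/-- `S ⊆ 𝔸` is bounded (equivalently, bounded in the `ℝ`-coordinate). -/
def BoundedA (S : Set Ann) : Prop := BddAbove (Prod.snd '' S) ∧ BddBelow (Prod.snd '' S)

/-- `E ⊆ 𝔸` is essential: no connected component of its complement is unbounded both
above and below. -/
def EssentialA (E : Set Ann) : Prop :=
  ∀ x ∈ Eᶜ, ¬ (UnbAbove (connectedComponentIn Eᶜ x) ∧ UnbBelow (connectedComponentIn Eᶜ x))

/-- An annular continuum: a compact connected set whose complement has exactly two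
connected components, both unbounded. -/
def IsAnnularContinuum (E : Set Ann) : Prop :=
  IsCompact E ∧ IsConnected E ∧
  (∀ x ∈ Eᶜ, ¬ BoundedA (connectedComponentIn Eᶜ x)) ∧
  ∃ x y, x ∈ Eᶜ ∧ y ∈ Eᶜ ∧ connectedComponentIn Eᶜ x ≠ connectedComponentIn Eᶜ y ∧
    ∀ z ∈ Eᶜ, connectedComponentIn Eᶜ z = connectedComponentIn Eᶜ x ∨
      connectedComponentIn Eᶜ z = connectedComponentIn Eᶜ y

/-- A circloid: an annular continuum containing no strictly smaller annular continuum. -/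
def IsCircloidA (C : Set Ann) : Prop :=
  IsAnnularContinuum C ∧ ∀ E ⊆ C, IsAnnularContinuum E → E = C

/-- `ℒ(U)`: the connected component of `𝔸 \ cl(U)` unbounded from below (for a
generating set it is unique; in general we take the union of all components of
`𝔸 \ cl(U)` unbounded from below). -/
def lowerComp (U : Set Ann) : Set Ann :=
  {z | z ∈ (closure U)ᶜ ∧ UnbBelow (connectedComponentIn (closure U)ᶜ z)}

/-- `𝒰(L)`: the connected component of `𝔸 \ cl(L)` unbounded from above. -/
def upperComp (L : Set Ann) : Set Ann :=
  {z | z ∈ (closure L)ᶜ ∧ UnbAbove (connectedComponentIn (closure L)ᶜ z)}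

/-- An upper generating set: bounded from below with essential closure. -/
def UpperGen (U : Set Ann) : Prop := BddBelow (Prod.snd '' U) ∧ EssentialA (closure U)

/-- A lower generating set: bounded from above with essential closure. -/
def LowerGen (L : Set Ann) : Prop := BddAbove (Prod.snd '' L) ∧ EssentialA (closure L)

/-- `𝒞⁻(U) = 𝔸 \ (𝒰ℒ(U) ∪ ℒ𝒰ℒ(U))`. -/
def Cminus (U : Set Ann) : Set Ann :=
  (upperComp (lowerComp U) ∪ lowerComp (upperComp (lowerComp U)))ᶜ

/-- `𝒞⁺(L) = 𝔸 \ (ℒ𝒰(L) ∪ 𝒰ℒ𝒰(L))`. -/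
def Cplus (L : Set Ann) : Set Ann :=
  (lowerComp (upperComp L) ∪ upperComp (lowerComp (upperComp L)))ᶜ

/-!
Among connected open neighbourhoods `U` of the upper end and `V` of the lower end of `𝔸`,
disjointness is a Galois correspondence, with `V ↦ 𝒰(V)` and `U ↦ ℒ(U)` as its polarities; so
`𝒰ℒ𝒰(L)` and `ℒ𝒰(L)` are each the largest domain disjoint from the other. For such a pair `(U, V)`
neither side can be enlarged, which is the minimality of `(U ∪ V)ᶜ`.

The topological content is that `(U ∪ V)ᶜ` is connected. If it split into closed pieces `A` and `B`,
maximality forces `U` and `V` to lie in one component of `Aᶜ` and in one component of `Bᶜ`. Let `φ`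
be a Urysohn function equal to `0` on `A` and to `1` on `B`. The circle-valued map that is `φ mod 1`
on `U` and `0` off `U` is trivial near the lower end, so it lifts to a real function; the increment
of that lift from `U` to `V`, computed in `Aᶜ` and in `Bᶜ`, differs by `1`.
-/

/-! ### Lifting circle-valued maps -/

theorem exists_lift_of_homotopic {Y Z W : Type*} [TopologicalSpace Y] [TopologicalSpace Z]
    [TopologicalSpace W] {p : Z → W} (hp : IsCoveringMap p) {f₀ f₁ : C(Y, W)}
    (h : f₀.Homotopic f₁) {g₀ : C(Y, Z)} (hg₀ : ∀ y, p (g₀ y) = f₀ y) :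
    ∃ g₁ : C(Y, Z), ∀ y, p (g₁ y) = f₁ y := by
  obtain ⟨H⟩ := h
  have H_zero : ∀ y, H.toContinuousMap (0, y) = p (g₀ y) := fun y =>
    (H.apply_zero y).trans (hg₀ y).symm
  refine ⟨(hp.liftHomotopy H.toContinuousMap g₀ H_zero).comp
    ((ContinuousMap.const Y 1).prodMk (ContinuousMap.id Y)), fun y => ?_⟩
  exact (congrFun (hp.liftHomotopy_lifts H.toContinuousMap g₀ H_zero) (1, y)).trans (H.apply_one y)

section Topology

variable {X : Type*} [TopologicalSpace X]

theorem sub_eq_sub_of_coe_addCircle_eq {S : Set X} (hS : IsPreconnected S) {f g : X → ℝ}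
    (hf : ContinuousOn f S) (hg : ContinuousOn g S)
    (hfg : ∀ x ∈ S, (f x : AddCircle (1 : ℝ)) = g x) {x y : X} (hx : x ∈ S) (hy : y ∈ S) :
    f x - g x = f y - g y := by
  have hshift : ((f x - g x : ℝ) : AddCircle (1 : ℝ)) = 0 := by
    rw [AddCircle.coe_sub, hfg x hx, sub_self]
  have heq : Set.EqOn f (fun z => g z + (f x - g x)) S := by
    refine (AddCircle.isCoveringMap_coe (1 : ℝ)).eqOn_of_comp_eqOn hS hf
      (hg.add continuousOn_const) (fun z hz => ?_) hx (by ring)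
    simp only [Function.comp_apply, AddCircle.coe_add, hshift, add_zero, hfg z hz]
  linarith [heq hy]

/-- Every continuous circle-valued map on `X` that vanishes off `U` lifts to a continuous
real-valued function; cohomologically, `H¹(X, X \ U; ℤ) → H¹(X; ℤ)` is zero. -/
def CircleMapsLift (U : Set X) : Prop :=
  ∀ F : C(X, AddCircle (1 : ℝ)), (∀ x ∉ U, F x = 0) →
    ∃ ψ : C(X, ℝ), ∀ x, (ψ x : AddCircle (1 : ℝ)) = F x

theorem CircleMapsLift.notMem_connectedComponentIn_compl [NormalSpace X] {U A B : Set X}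
    (hlift : CircleMapsLift U) (hA : IsClosed A) (hB : IsClosed B) (hAB : Disjoint A B)
    (hfr : frontier U ⊆ A ∪ B) {t b : X} (ht : t ∈ U) (hb : b ∉ U)
    (hbA : b ∈ connectedComponentIn Aᶜ t) : b ∉ connectedComponentIn Bᶜ t := by
  classical
  intro hbB
  obtain ⟨φ, hφA, hφB, -⟩ := exists_continuous_zero_one_of_isClosed hA hB hAB
  have coe_one : ((1 : ℝ) : AddCircle (1 : ℝ)) = 0 := AddCircle.coe_period 1
  have hF : Continuous fun x => if x ∈ U then (φ x : AddCircle (1 : ℝ)) else 0 := by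
    refine Continuous.if (fun x hx => ?_)
      ((AddCircle.continuous_mk' (1 : ℝ)).comp φ.continuous) continuous_const
    rcases hfr hx with hxA | hxB
    · rw [hφA hxA, Pi.zero_apply, AddCircle.coe_zero]
    · rw [hφB hxB, Pi.one_apply, coe_one]
  obtain ⟨ψ, hψ⟩ := hlift ⟨_, hF⟩ fun x hx => if_neg hx
  -- Off `D`, the function `φ - c` on `U`, extended by `0`, is another lift of the same map.
  have increment : ∀ (D : Set X) (c : ℝ), (c : AddCircle (1 : ℝ)) = 0 →
      (∀ x ∈ A ∪ B, x ∉ D → φ x = c) → b ∈ connectedComponentIn Dᶜ t →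
      ψ t - (φ t - c) = ψ b := by
    intro D c hc hφD hbD
    have htD : t ∈ connectedComponentIn Dᶜ t :=
      mem_connectedComponentIn (connectedComponentIn_nonempty_iff.1 ⟨b, hbD⟩)
    have hlocal : ContinuousOn (fun x => if x ∈ U then φ x - c else 0)
        (connectedComponentIn Dᶜ t) := by
      refine ContinuousOn.if (fun x hx => ?_) (by fun_prop) continuousOn_const
      exact sub_eq_zero.2 (hφD x (hfr hx.2) (connectedComponentIn_subset _ _ hx.1))
    have hsub := sub_eq_sub_of_coe_addCircle_eq isPreconnected_connectedComponentIn
      ψ.continuous.continuousOn hlocal (fun x _ => ?_) htD hbD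
    · simpa only [if_pos ht, if_neg hb, sub_zero] using hsub
    · rw [hψ x, ContinuousMap.coe_mk]
      split_ifs <;> simp [hc]
  have incrementA := increment A 1 coe_one (fun x hx hxA => hφB (hx.resolve_left hxA)) hbA
  have incrementB := increment B 0 (AddCircle.coe_zero 1)
    (fun x hx hxB => hφA (hx.resolve_right hxB)) hbB
  linarith

/-! ### Connected components -/

theorem isClosed_union_connectedComponentIn_compl {A : Set X} (hA : IsClosed A) (x : X) :
    IsClosed (A ∪ connectedComponentIn Aᶜ x) := by
  refine isClosed_of_closure_subset ?_
  rw [closure_union, hA.closure_eq]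
  rintro z (hzA | hz)
  · exact Or.inl hzA
  refine or_iff_not_imp_left.2 fun hzA => ?_
  obtain ⟨w, hw⟩ := closure_nonempty_iff.1 ⟨z, hz⟩
  have hpre : IsPreconnected (insert z (connectedComponentIn Aᶜ x)) :=
    isPreconnected_connectedComponentIn.subset_closure (Set.subset_insert _ _)
      (Set.insert_subset hz subset_closure)
  rw [connectedComponentIn_eq hw]
  exact hpre.subset_connectedComponentIn (Set.mem_insert_of_mem z hw)
    (Set.insert_subset hzA (connectedComponentIn_subset Aᶜ x)) (Set.mem_insert _ _)

theorem disjoint_connectedComponentIn_of_notMem {F : Set X} {x y : X} (hy : y ∈ F)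
    (hyx : y ∉ connectedComponentIn F x) :
    Disjoint (connectedComponentIn F x) (connectedComponentIn F y) := by
  refine Set.disjoint_left.2 fun z hzx hzy => hyx ?_
  rw [connectedComponentIn_eq hzx, ← connectedComponentIn_eq hzy]
  exact mem_connectedComponentIn hy

theorem connectedComponentIn_union_eq_left {U V : Set X} (hU : IsOpen U) (hV : IsOpen V)
    (hUV : Disjoint U V) (hUc : IsPreconnected U) {x : X} (hx : x ∈ U) :
    connectedComponentIn (U ∪ V) x = U :=
  (isPreconnected_connectedComponentIn.subset_left_of_subset_union hU hV hUV
    (connectedComponentIn_subset _ _) ⟨x, mem_connectedComponentIn (Or.inl hx), hx⟩).antisymm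
    (hUc.subset_connectedComponentIn hx Set.subset_union_left)

theorem frontier_subset_compl_union {U V : Set X} (hU : IsOpen U) (hV : IsOpen V)
    (hUV : Disjoint U V) : frontier U ⊆ (U ∪ V)ᶜ := by
  rintro x hx (hxU | hxV)
  · exact (hU.frontier_eq ▸ hx).2 hxU
  · exact Set.disjoint_left.1 (hUV.closure_left hV) (frontier_subset_closure hx) hxV

/-! ### Ends and their domains -/

/-- A filter describing a connected end of `X`: it is proper, and the connected open sets form a
basis of it. -/
class IsConnectedEnd (e : Filter X) : Prop extends NeBot e where
  exists_isOpen_isPreconnected : ∀ s ∈ e, ∃ V ∈ e, V ⊆ s ∧ IsOpen V ∧ IsPreconnected V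

/-- The common form of `𝒰` and `ℒ`: the union of the components of `X \ cl(S)` that accumulate at
the end `e`. -/
def endComponent (e : Filter X) (S : Set X) : Set X :=
  {x | x ∈ (closure S)ᶜ ∧ ∃ᶠ y in e, y ∈ connectedComponentIn (closure S)ᶜ x}

/-- A connected open neighbourhood of the end `e`. -/
structure IsEndDomain (e : Filter X) (U : Set X) : Prop where
  isOpen : IsOpen U
  isPreconnected : IsPreconnected U
  mem : U ∈ e

variable {e e' : Filter X} {S U V : Set X}

theorem IsEndDomain.nonempty [NeBot e] (hU : IsEndDomain e U) : U.Nonempty :=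
  nonempty_of_mem hU.mem

theorem disjoint_endComponent (e : Filter X) (S : Set X) : Disjoint S (endComponent e S) :=
  Set.disjoint_left.2 fun _ hxS hx => hx.1 (subset_closure hxS)

theorem isOpen_endComponent [LocallyConnectedSpace X] (e : Filter X) (S : Set X) :
    IsOpen (endComponent e S) := by
  refine isOpen_iff_mem_nhds.2 fun x ⟨hx, hfreq⟩ => ?_
  filter_upwards [isClosed_closure.isOpen_compl.connectedComponentIn.mem_nhds
    (mem_connectedComponentIn hx)] with y hy
  exact ⟨connectedComponentIn_subset _ _ hy, connectedComponentIn_eq hy ▸ hfreq⟩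

theorem endComponent_eq_connectedComponentIn [IsConnectedEnd e] (hS : Sᶜ ∈ e) {x : X}
    (hx : x ∈ endComponent e S) : endComponent e S = connectedComponentIn (closure S)ᶜ x := by
  obtain ⟨V, hVe, hVS, hVo, hVc⟩ := IsConnectedEnd.exists_isOpen_isPreconnected _ hS
  have hV : V ⊆ (closure S)ᶜ :=
    ((Set.subset_compl_iff_disjoint_left.1 hVS).closure_left hVo).subset_compl_left
  have component_eq : ∀ y ∈ endComponent e S, ∀ v ∈ V,
      connectedComponentIn (closure S)ᶜ y = connectedComponentIn (closure S)ᶜ v := by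
    intro y hy v hv
    obtain ⟨w, hwy, hwV⟩ := (hy.2.and_eventually hVe).exists
    rw [connectedComponentIn_eq hwy]
    exact (connectedComponentIn_eq (hVc.subset_connectedComponentIn hv hV hwV)).symm
  obtain ⟨v, hv⟩ := nonempty_of_mem hVe
  refine Set.Subset.antisymm (fun y hy => ?_) fun y hy => ?_
  · rw [component_eq x hx v hv, ← component_eq y hy v hv]
    exact mem_connectedComponentIn hy.1
  · exact ⟨connectedComponentIn_subset _ _ hy, connectedComponentIn_eq hy ▸ hx.2⟩

theorem IsEndDomain.subset_endComponent [NeBot e] (hU : IsEndDomain e U) (hSU : Disjoint S U) :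
    U ⊆ endComponent e S := by
  have hU' : U ⊆ (closure S)ᶜ := (hSU.closure_left hU.isOpen).subset_compl_left
  exact fun x hx => ⟨hU' hx, Frequently.mono (Eventually.frequently hU.mem) fun y hy =>
    hU.isPreconnected.subset_connectedComponentIn hx hU' hy⟩

theorem isEndDomain_endComponent [LocallyConnectedSpace X] [IsConnectedEnd e] (hS : Sᶜ ∈ e) :
    IsEndDomain e (endComponent e S) := by
  obtain ⟨V, hVe, hVS, hVo, hVc⟩ := IsConnectedEnd.exists_isOpen_isPreconnected _ hS
  have hV : V ⊆ endComponent e S := IsEndDomain.subset_endComponent ⟨hVo, hVc, hVe⟩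
    (Set.subset_compl_iff_disjoint_left.1 hVS)
  obtain ⟨x, hx⟩ := nonempty_of_mem hVe
  refine ⟨isOpen_endComponent e S, ?_, mem_of_superset hVe hV⟩
  rw [endComponent_eq_connectedComponentIn hS (hV hx)]
  exact isPreconnected_connectedComponentIn

theorem IsEndDomain.compl_mem_of_disjoint (hV : IsEndDomain e' V) (hUV : Disjoint U V) : Uᶜ ∈ e' :=
  mem_of_superset hV.mem hUV.subset_compl_left

/-! ### Complementary pairs of end domains -/

/-- Domains `U` of the end `e` and `V` of the end `e'`, each of them the largest one disjoint from
the other. -/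
structure IsComplementaryPair (e e' : Filter X) (U V : Set X) : Prop where
  isEndDomain_left : IsEndDomain e U
  isEndDomain_right : IsEndDomain e' V
  endComponent_right : endComponent e V = U
  endComponent_left : endComponent e' U = V

namespace IsComplementaryPair

theorem symm (h : IsComplementaryPair e e' U V) : IsComplementaryPair e' e V U :=
  ⟨h.isEndDomain_right, h.isEndDomain_left, h.endComponent_left, h.endComponent_right⟩

theorem disjoint (h : IsComplementaryPair e e' U V) : Disjoint U V :=
  h.endComponent_left ▸ disjoint_endComponent e' U

theorem of_isEndDomain [LocallyConnectedSpace X] [IsConnectedEnd e] [IsConnectedEnd e']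
    (hU : IsEndDomain e U) (hU' : Uᶜ ∈ e') :
    IsComplementaryPair e e' (endComponent e (endComponent e' U)) (endComponent e' U) := by
  have hV : IsEndDomain e' (endComponent e' U) := isEndDomain_endComponent hU'
  have hUV : Disjoint U (endComponent e' U) := disjoint_endComponent e' U
  have hW : IsEndDomain e (endComponent e (endComponent e' U)) :=
    isEndDomain_endComponent (hU.compl_mem_of_disjoint hUV.symm)
  have hVW := disjoint_endComponent e (endComponent e' U)
  have hUW : U ⊆ endComponent e (endComponent e' U) := hU.subset_endComponent hUV.symm
  refine ⟨hW, hV, rfl, Set.Subset.antisymm ?_ (hV.subset_endComponent hVW.symm)⟩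
  exact (isEndDomain_endComponent (hV.compl_mem_of_disjoint hVW.symm)).subset_endComponent
    ((disjoint_endComponent e' _).mono_left hUW)

theorem connectedComponentIn_compl_eq_left [LocallyConnectedSpace X] [NeBot e]
    (h : IsComplementaryPair e e' U V) {A : Set X} (hA : IsClosed A) (hUA : U ⊆ Aᶜ) {t : X}
    (ht : t ∈ U) (hV : Disjoint V (connectedComponentIn Aᶜ t)) :
    connectedComponentIn Aᶜ t = U := by
  have hU : U ⊆ connectedComponentIn Aᶜ t :=
    h.isEndDomain_left.isPreconnected.subset_connectedComponentIn ht hUA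
  have hdom : IsEndDomain e (connectedComponentIn Aᶜ t) :=
    ⟨hA.isOpen_compl.connectedComponentIn, isPreconnected_connectedComponentIn,
      mem_of_superset h.isEndDomain_left.mem hU⟩
  exact ((hdom.subset_endComponent hV).trans_eq h.endComponent_right).antisymm hU

theorem eq_empty_of_notMem_connectedComponentIn [LocallyConnectedSpace X] [PreconnectedSpace X]
    [NeBot e] [NeBot e'] (h : IsComplementaryPair e e' U V) {A B : Set X} (hA : IsClosed A)
    (hB : IsClosed B) (hAB : Disjoint A B) (hcompl : (U ∪ V)ᶜ = A ∪ B) {t b : X} (ht : t ∈ U)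
    (hb : b ∈ V) (hbt : b ∉ connectedComponentIn Aᶜ t) : B = ∅ := by
  have hUVA : U ∪ V ⊆ Aᶜ := Set.subset_compl_comm.1 (hcompl ▸ Set.subset_union_left)
  obtain ⟨hUA, hVA⟩ := Set.union_subset_iff.1 hUVA
  have hdisj := disjoint_connectedComponentIn_of_notMem (hVA hb) hbt
  have hUcomp : connectedComponentIn Aᶜ t = U :=
    h.connectedComponentIn_compl_eq_left hA hUA ht <| hdisj.symm.mono_left <|
      h.isEndDomain_right.isPreconnected.subset_connectedComponentIn hb hVA
  have hVcomp : connectedComponentIn Aᶜ b = V :=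
    h.symm.connectedComponentIn_compl_eq_left hA hVA hb (hUcomp ▸ hdisj)
  have hAU : IsClosed (A ∪ U) := hUcomp ▸ isClosed_union_connectedComponentIn_compl hA t
  have hAV : IsClosed (A ∪ V) := hVcomp ▸ isClosed_union_connectedComponentIn_compl hA b
  have hBopen : IsOpen B := by
    have hBeq : B = ((A ∪ U) ∪ (A ∪ V))ᶜ := by
      rw [← Set.union_union_distrib_left, Set.compl_union, hcompl, Set.inter_union_distrib_left,
        Set.compl_inter_self, Set.empty_union, Set.inter_eq_right.2 hAB.subset_compl_left]
    exact hBeq ▸ (hAU.union hAV).isOpen_compl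
  refine (isClopen_iff.1 ⟨hB, hBopen⟩).resolve_right fun hBuniv => ?_
  have htB : t ∈ (U ∪ V)ᶜ := hcompl ▸ Or.inr (hBuniv ▸ Set.mem_univ t)
  exact htB (Or.inl ht)

theorem nonempty_compl_union [PreconnectedSpace X] [NeBot e] [NeBot e']
    (h : IsComplementaryPair e e' U V) : (U ∪ V)ᶜ.Nonempty := by
  refine Set.nonempty_compl.2 fun huniv => ?_
  exact (nonempty_inter h.isEndDomain_left.isOpen h.isEndDomain_right.isOpen huniv
    h.isEndDomain_left.nonempty h.isEndDomain_right.nonempty).ne_empty h.disjoint.inter_eq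

theorem isConnected_compl_union [NormalSpace X] [LocallyConnectedSpace X] [PreconnectedSpace X]
    [NeBot e] [NeBot e'] (h : IsComplementaryPair e e' U V) (hlift : CircleMapsLift U) :
    IsConnected (U ∪ V)ᶜ := by
  have hU := h.isEndDomain_left
  have hV := h.isEndDomain_right
  have hK : IsClosed (U ∪ V)ᶜ := (hU.isOpen.union hV.isOpen).isClosed_compl
  refine ⟨h.nonempty_compl_union, (isPreconnected_iff_subset_of_fully_disjoint_closed hK).2 ?_⟩
  intro A B hA hB hcov hAB
  have hcompl : (U ∪ V)ᶜ = (U ∪ V)ᶜ ∩ A ∪ (U ∪ V)ᶜ ∩ B := by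
    rw [← Set.inter_union_distrib_left, Set.inter_eq_left.2 hcov]
  have hdisj : Disjoint ((U ∪ V)ᶜ ∩ A) ((U ∪ V)ᶜ ∩ B) :=
    hAB.mono Set.inter_subset_right Set.inter_subset_right
  obtain ⟨t, ht⟩ := hU.nonempty
  obtain ⟨b, hb⟩ := hV.nonempty
  by_cases hbA : b ∈ connectedComponentIn ((U ∪ V)ᶜ ∩ A)ᶜ t
  · have hbB := hlift.notMem_connectedComponentIn_compl (hK.inter hA) (hK.inter hB) hdisj
      ((frontier_subset_compl_union hU.isOpen hV.isOpen h.disjoint).trans_eq hcompl) ht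
      (Set.disjoint_right.1 h.disjoint hb) hbA
    have hempty := h.eq_empty_of_notMem_connectedComponentIn (hK.inter hB) (hK.inter hA)
      hdisj.symm (hcompl.trans (Set.union_comm _ _)) ht hb hbB
    rw [hempty, Set.empty_union] at hcompl
    exact Or.inr (Set.inter_eq_left.1 hcompl.symm)
  · have hempty := h.eq_empty_of_notMem_connectedComponentIn (hK.inter hA) (hK.inter hB)
      hdisj hcompl ht hb hbA
    rw [hempty, Set.union_empty] at hcompl
    exact Or.inl (Set.inter_eq_left.1 hcompl.symm)

theorem eq_of_union_subset_union [NeBot e] [NeBot e'] (h : IsComplementaryPair e e' U V)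
    {U' V' : Set X} (hU' : IsEndDomain e U') (hV' : IsEndDomain e' V') (hdisj : Disjoint U' V')
    (hsub : U ∪ V ⊆ U' ∪ V') : U' = U ∧ V' = V := by
  obtain ⟨hUsub, hVsub⟩ := Set.union_subset_iff.1 hsub
  have hUU' : U ⊆ U' := h.isEndDomain_left.isPreconnected.subset_left_of_subset_union
    hU'.isOpen hV'.isOpen hdisj hUsub
    (nonempty_of_mem (inter_mem h.isEndDomain_left.mem hU'.mem))
  have hVV' : V ⊆ V' := h.isEndDomain_right.isPreconnected.subset_right_of_subset_union
    hU'.isOpen hV'.isOpen hdisj hVsub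
    (nonempty_of_mem (inter_mem h.isEndDomain_right.mem hV'.mem))
  constructor
  · exact ((hU'.subset_endComponent (hdisj.symm.mono_left hVV')).trans_eq
      h.endComponent_right).antisymm hUU'
  · exact ((hV'.subset_endComponent (hdisj.mono_left hUU')).trans_eq
      h.endComponent_left).antisymm hVV'

end IsComplementaryPair

theorem endComponent_union_subset [LocallyConnectedSpace X] [IsConnectedEnd e] [IsConnectedEnd e']
    (hS : Sᶜ ∈ e) (hS' : Sᶜ ∈ e') (hdisj : Disjoint (endComponent e S) (endComponent e' S)) :
    endComponent e S ∪ endComponent e' S ⊆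
      endComponent e (endComponent e' (endComponent e S)) ∪
        endComponent e' (endComponent e S) :=
  Set.union_subset_union
    ((isEndDomain_endComponent hS).subset_endComponent (disjoint_endComponent e' _).symm)
    ((isEndDomain_endComponent hS').subset_endComponent hdisj)

end Topology

/-! ### The two ends of the annulus -/

instance isConnectedEnd_atTop : IsConnectedEnd (atTop : Filter ℝ) where
  exists_isOpen_isPreconnected s hs := by
    obtain ⟨M, -, hM⟩ := atTop_basis_Ioi.mem_iff.1 hs
    exact ⟨Set.Ioi M, Ioi_mem_atTop M, hM, isOpen_Ioi, isPreconnected_Ioi⟩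

instance isConnectedEnd_atBot : IsConnectedEnd (atBot : Filter ℝ) where
  exists_isOpen_isPreconnected s hs := by
    obtain ⟨m, -, hm⟩ := atBot_basis_Iio.mem_iff.1 hs
    exact ⟨Set.Iio m, Iio_mem_atBot m, hm, isOpen_Iio, isPreconnected_Iio⟩

instance isConnectedEnd_comap_snd {Y Z : Type*} [TopologicalSpace Y] [TopologicalSpace Z]
    [ConnectedSpace Y] (l : Filter Z) [IsConnectedEnd l] :
    IsConnectedEnd (comap (Prod.snd : Y × Z → Z) l) where
  exists_isOpen_isPreconnected s hs := by
    obtain ⟨u, hu, hus⟩ := mem_comap.1 hs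
    obtain ⟨V, hVl, hVu, hVo, hVc⟩ := IsConnectedEnd.exists_isOpen_isPreconnected u hu
    refine ⟨Prod.snd ⁻¹' V, preimage_mem_comap hVl, (Set.preimage_mono hVu).trans hus,
      hVo.preimage continuous_snd, ?_⟩
    rw [← Set.univ_prod]
    exact isPreconnected_univ.prod hVc

/-- The filter of neighbourhoods of the upper end of `𝔸`. -/
abbrev upperEnd : Filter Ann := comap Prod.snd atTop

/-- The filter of neighbourhoods of the lower end of `𝔸`. -/
abbrev lowerEnd : Filter Ann := comap Prod.snd atBot

instance locallyConnectedSpace_ann : LocallyConnectedSpace Ann := by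
  have : LocallyPathConnectedSpace (AddCircle (1 : ℝ)) :=
    QuotientAddGroup.isOpenQuotientMap_mk.isQuotientMap.locallyPathConnectedSpace
  infer_instance

theorem unbAbove_iff_frequently {S : Set Ann} : UnbAbove S ↔ ∃ᶠ p in upperEnd, p ∈ S := by
  simp only [UnbAbove, not_bddAbove_iff, frequently_comap, frequently_atTop', Set.mem_image,
    gt_iff_lt, and_comm]

theorem unbBelow_iff_frequently {S : Set Ann} : UnbBelow S ↔ ∃ᶠ p in lowerEnd, p ∈ S := by
  simp only [UnbBelow, not_bddBelow_iff, frequently_comap, frequently_atBot', Set.mem_image,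
    and_comm]

theorem compl_mem_upperEnd_iff {S : Set Ann} : Sᶜ ∈ upperEnd ↔ BddAbove (Prod.snd '' S) := by
  rw [← not_iff_not, ← UnbAbove, unbAbove_iff_frequently]; rfl

theorem compl_mem_lowerEnd_iff {S : Set Ann} : Sᶜ ∈ lowerEnd ↔ BddBelow (Prod.snd '' S) := by
  rw [← not_iff_not, ← UnbBelow, unbBelow_iff_frequently]; rfl

theorem compl_mem_upperEnd_of_isCompact {K : Set Ann} (hK : IsCompact K) : Kᶜ ∈ upperEnd :=
  compl_mem_upperEnd_iff.2 (hK.image continuous_snd).bddAbove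

theorem compl_mem_lowerEnd_of_isCompact {K : Set Ann} (hK : IsCompact K) : Kᶜ ∈ lowerEnd :=
  compl_mem_lowerEnd_iff.2 (hK.image continuous_snd).bddBelow

theorem upperComp_eq_endComponent (S : Set Ann) : upperComp S = endComponent upperEnd S := by
  simp only [upperComp, endComponent, unbAbove_iff_frequently]

theorem lowerComp_eq_endComponent (S : Set Ann) : lowerComp S = endComponent lowerEnd S := by
  simp only [lowerComp, endComponent, unbBelow_iff_frequently]

theorem circleMapsLift_of_compl_mem_lowerEnd {U : Set Ann} (hU : Uᶜ ∈ lowerEnd) :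
    CircleMapsLift U := by
  intro F hF
  obtain ⟨s, hs, hsU⟩ := mem_comap.1 hU
  obtain ⟨m, hm⟩ := nonempty_of_mem hs
  have hnull : (ContinuousMap.const Ann (0 : AddCircle (1 : ℝ))).Homotopic F := by
    have hretract := (ContinuousMap.Homotopic.refl F).comp
      ((ContinuousMap.Homotopic.refl (ContinuousMap.id (AddCircle (1 : ℝ)))).prodMap
        ⟨ContinuousMap.Homotopy.affine (ContinuousMap.const ℝ m) (ContinuousMap.id ℝ)⟩)
    have hconst : F.comp ((ContinuousMap.id (AddCircle (1 : ℝ))).prodMap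
        (ContinuousMap.const ℝ m)) = ContinuousMap.const Ann 0 :=
      ContinuousMap.ext fun p => hF (p.1, m) (hsU hm)
    exact hconst ▸ hretract
  exact exists_lift_of_homotopic (AddCircle.isCoveringMap_coe (1 : ℝ)) hnull
    (g₀ := ContinuousMap.const Ann 0) fun _ => AddCircle.coe_zero 1

theorem isCompact_of_compl_mem_ends {K : Set Ann} (hK : IsClosed K) (hupper : Kᶜ ∈ upperEnd)
    (hlower : Kᶜ ∈ lowerEnd) : IsCompact K := by
  obtain ⟨M, hM⟩ := compl_mem_upperEnd_iff.1 hupper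
  obtain ⟨m, hm⟩ := compl_mem_lowerEnd_iff.1 hlower
  exact (isCompact_univ.prod (isCompact_Icc (a := m) (b := M))).of_isClosed_subset hK fun p hp =>
    ⟨Set.mem_univ _, hm (Set.mem_image_of_mem _ hp), hM (Set.mem_image_of_mem _ hp)⟩

/-! ### Annular continua and circloids -/

theorem isAnnularContinuum_compl_union {U V : Set Ann} (hU : IsEndDomain upperEnd U)
    (hV : IsEndDomain lowerEnd V) (hUV : Disjoint U V) (hconn : IsConnected (U ∪ V)ᶜ) :
    IsAnnularContinuum (U ∪ V)ᶜ := by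
  have hcompU : ∀ z ∈ U, connectedComponentIn (U ∪ V) z = U := fun _ =>
    connectedComponentIn_union_eq_left hU.isOpen hV.isOpen hUV hU.isPreconnected
  have hcompV : ∀ z ∈ V, connectedComponentIn (U ∪ V) z = V := fun _ =>
    Set.union_comm U V ▸
      connectedComponentIn_union_eq_left hV.isOpen hU.isOpen hUV.symm hV.isPreconnected
  have hcompact : IsCompact (U ∪ V)ᶜ := by
    refine isCompact_of_compl_mem_ends (hU.isOpen.union hV.isOpen).isClosed_compl ?_ ?_ <;>
      rw [compl_compl]
    exacts [mem_of_superset hU.mem Set.subset_union_left,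
      mem_of_superset hV.mem Set.subset_union_right]
  obtain ⟨t, ht⟩ := hU.nonempty
  obtain ⟨b, hb⟩ := hV.nonempty
  rw [IsAnnularContinuum, compl_compl]
  refine ⟨hcompact, hconn, ?_, t, b, Or.inl ht, Or.inr hb, ?_, ?_⟩
  · rintro z (hz | hz) ⟨hAbove, hBelow⟩
    · exact unbAbove_iff_frequently.2 (Eventually.frequently hU.mem) (hcompU z hz ▸ hAbove)
    · exact unbBelow_iff_frequently.2 (Eventually.frequently hV.mem) (hcompV z hz ▸ hBelow)
  · rw [hcompU t ht, hcompV b hb]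
    exact hUV.ne hU.nonempty.ne_empty
  · rw [hcompU t ht, hcompV b hb]
    exact fun z hz => hz.imp (hcompU z) (hcompV z)

theorem compl_eq_upperComp_union_lowerComp {E : Set Ann} (hE : IsClosed E)
    (hunb : ∀ x ∈ Eᶜ, ¬ BoundedA (connectedComponentIn Eᶜ x)) :
    Eᶜ = upperComp E ∪ lowerComp E := by
  ext z
  simp only [upperComp, lowerComp, hE.closure_eq, Set.mem_union, Set.mem_ofPred_eq, ← and_or_left]
  exact ⟨fun hz => ⟨hz, not_and_or.1 (hunb z hz)⟩, And.left⟩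

theorem disjoint_upperComp_lowerComp {S : Set Ann} (hS : EssentialA (closure S)) :
    Disjoint (upperComp S) (lowerComp S) :=
  Set.disjoint_left.2 fun z hzU hzL => hS z hzU.1 ⟨hzU.2, hzL.2⟩

theorem IsAnnularContinuum.essentialA {E : Set Ann} (hE : IsAnnularContinuum E) :
    EssentialA E := by
  obtain ⟨hcompact, -, hunb, x, y, hx, hy, hxy, -⟩ := hE
  rintro z hz ⟨hAbove, hBelow⟩
  have hcl : closure E = E := hcompact.isClosed.closure_eq
  have hzU : z ∈ upperComp E := by rw [upperComp, hcl]; exact ⟨hz, hAbove⟩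
  have hzL : z ∈ lowerComp E := by rw [lowerComp, hcl]; exact ⟨hz, hBelow⟩
  have hcompl := compl_eq_upperComp_union_lowerComp hcompact.isClosed hunb
  rw [upperComp_eq_endComponent] at hzU hcompl
  rw [lowerComp_eq_endComponent] at hzL hcompl
  rw [endComponent_eq_connectedComponentIn (compl_mem_upperEnd_of_isCompact hcompact) hzU,
    endComponent_eq_connectedComponentIn (compl_mem_lowerEnd_of_isCompact hcompact) hzL,
    Set.union_self, hcl] at hcompl
  have hpre : IsPreconnected Eᶜ := hcompl ▸ isPreconnected_connectedComponentIn
  rw [hpre.connectedComponentIn hx, hpre.connectedComponentIn hy] at hxy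
  exact hxy rfl

theorem IsComplementaryPair.isCircloidA {U V : Set Ann}
    (h : IsComplementaryPair upperEnd lowerEnd U V) : IsCircloidA (U ∪ V)ᶜ := by
  have hlift : CircleMapsLift U := circleMapsLift_of_compl_mem_lowerEnd
    (h.isEndDomain_right.compl_mem_of_disjoint h.disjoint)
  refine ⟨isAnnularContinuum_compl_union h.isEndDomain_left h.isEndDomain_right h.disjoint
    (h.isConnected_compl_union hlift), fun E hEC hE => ?_⟩
  have hcompact : IsCompact E := hE.1
  have hcompl := compl_eq_upperComp_union_lowerComp hcompact.isClosed hE.2.2.1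
  have hdisj := disjoint_upperComp_lowerComp (hcompact.isClosed.closure_eq.symm ▸ hE.essentialA)
  rw [upperComp_eq_endComponent, lowerComp_eq_endComponent] at hcompl hdisj
  obtain ⟨hU, hV⟩ := h.eq_of_union_subset_union
    (isEndDomain_endComponent (compl_mem_upperEnd_of_isCompact hcompact))
    (isEndDomain_endComponent (compl_mem_lowerEnd_of_isCompact hcompact)) hdisj
    (hcompl ▸ Set.subset_compl_comm.1 hEC)
  rw [← compl_compl E, hcompl, hU, hV]

theorem LowerGen.isCircloidA_Cplus {L : Set Ann} (hL : LowerGen L) : IsCircloidA (Cplus L) := by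
  obtain ⟨hbdd, hess⟩ := hL
  have hLtop : Lᶜ ∈ upperEnd := compl_mem_upperEnd_iff.2 hbdd
  have hbot : (endComponent upperEnd L)ᶜ ∈ lowerEnd := by
    obtain ⟨z, hz⟩ := (isEndDomain_endComponent hLtop).nonempty
    have hzess := not_and.1 (hess z hz.1) (unbAbove_iff_frequently.2 hz.2)
    rw [compl_mem_lowerEnd_iff, endComponent_eq_connectedComponentIn hLtop hz]
    exact not_not.1 hzess
  rw [Cplus, Set.union_comm]
  simp only [upperComp_eq_endComponent, lowerComp_eq_endComponent]
  exact (IsComplementaryPair.of_isEndDomain (isEndDomain_endComponent hLtop) hbot).isCircloidA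

theorem UpperGen.isCircloidA_Cminus {U : Set Ann} (hU : UpperGen U) : IsCircloidA (Cminus U) := by
  obtain ⟨hbdd, hess⟩ := hU
  have hUbot : Uᶜ ∈ lowerEnd := compl_mem_lowerEnd_iff.2 hbdd
  have htop : (endComponent lowerEnd U)ᶜ ∈ upperEnd := by
    obtain ⟨z, hz⟩ := (isEndDomain_endComponent hUbot).nonempty
    have hzess := not_and'.1 (hess z hz.1) (unbBelow_iff_frequently.2 hz.2)
    rw [compl_mem_upperEnd_iff, endComponent_eq_connectedComponentIn hUbot hz]
    exact not_not.1 hzess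
  rw [Cminus]
  simp only [upperComp_eq_endComponent, lowerComp_eq_endComponent]
  exact (IsComplementaryPair.of_isEndDomain (isEndDomain_endComponent hUbot) htop).symm.isCircloidA

theorem Cplus_subset_compl {S : Set Ann} (hlow : LowerGen S) (hup : UpperGen S) :
    Cplus S ⊆ (upperComp S ∪ lowerComp S)ᶜ := by
  have hdisj := disjoint_upperComp_lowerComp hlow.2
  rw [Cplus, Set.compl_subset_compl, Set.union_comm (lowerComp (upperComp S))]
  simp only [upperComp_eq_endComponent, lowerComp_eq_endComponent] at hdisj ⊢
  exact endComponent_union_subset (compl_mem_upperEnd_iff.2 hlow.1)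
    (compl_mem_lowerEnd_iff.2 hup.1) hdisj

theorem Cminus_subset_compl {S : Set Ann} (hlow : LowerGen S) (hup : UpperGen S) :
    Cminus S ⊆ (upperComp S ∪ lowerComp S)ᶜ := by
  have hdisj := disjoint_upperComp_lowerComp hlow.2
  rw [Cminus, Set.compl_subset_compl, Set.union_comm (upperComp S),
    Set.union_comm (upperComp (lowerComp S))]
  simp only [upperComp_eq_endComponent, lowerComp_eq_endComponent] at hdisj ⊢
  exact endComponent_union_subset (compl_mem_lowerEnd_iff.2 hup.1)
    (compl_mem_upperEnd_iff.2 hlow.1) hdisj.symm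

theorem statement10_general (E : Set Ann) (hcompact : IsCompact E) (hess : EssentialA E)
    (hunb : ∀ x ∈ Eᶜ, ¬ BoundedA (connectedComponentIn Eᶜ x)) :
    (IsCircloidA (Cplus E) ∧ Cplus E ⊆ E) ∧ (IsCircloidA (Cminus E) ∧ Cminus E ⊆ E) := by
  have hess' : EssentialA (closure E) := hcompact.isClosed.closure_eq.symm ▸ hess
  have hlow : LowerGen E := ⟨(hcompact.image continuous_snd).bddAbove, hess'⟩
  have hup : UpperGen E := ⟨(hcompact.image continuous_snd).bddBelow, hess'⟩
  have hE : (upperComp E ∪ lowerComp E)ᶜ = E := by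
    rw [← compl_eq_upperComp_union_lowerComp hcompact.isClosed hunb, compl_compl]
  exact ⟨⟨hlow.isCircloidA_Cplus, (Cplus_subset_compl hlow hup).trans_eq hE⟩,
    ⟨hup.isCircloidA_Cminus, (Cminus_subset_compl hlow hup).trans_eq hE⟩⟩

/-- Every annular continuum `E` contains a circloid; in fact both `𝒞⁺(E)` and `𝒞⁻(E)`
are circloids contained in `E`. -/
theorem statement10 (E : Set Ann) (hE : IsAnnularContinuum E) :
    (IsCircloidA (Cplus E) ∧ Cplus E ⊆ E) ∧ (IsCircloidA (Cminus E) ∧ Cminus E ⊆ E) :=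
  statement10_general E hE.1 hE.essentialA hE.2.2.1
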